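/- Let (X,d) be a metric space, p ∈ X, and define i_p(x,y) = d(x,y)/(d(x,p)·d(y,p)) for x,y ∈ X∖{p}. Define d_p(x,y) as the infimum over finite chains x = x₀, x₁, …, x_k = y in X∖{p} of ∑ i_p(x_i, x_{i+1}). Then for all x,y ∈ X∖{p}, (1/4)·i_p(x,y) ≤ d_p(x,y) ≤ i_p(x,y). -/

import Mathlib

open Metric

/-- The inversion kernel `i_p(x,y) = d(x,y)/(d(x,p)·d(y,p))`. -/
noncomputable def invKernel {X : Type*} [MetricSpace X] (p x y : X) : ℝ :=
  dist x y / (dist x p * dist y p)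

/-- The set of all chain sums `∑ i_p(x_i, x_{i+1})` over finite chains
`x = x₀, x₁, …, x_k = y` of points in `X ∖ {p}`. -/
noncomputable def chainSums {X : Type*} [MetricSpace X] (p x y : X) : Set ℝ :=
  {s | ∃ c : List X, c ≠ [] ∧ c.head? = some x ∧ c.getLast? = some y ∧
    (∀ z ∈ c, z ≠ p) ∧
    s = ((c.zip c.tail).map (fun q => invKernel p q.1 q.2)).sum}

/-!
Write `r z = 1 / d(z, p)`, so that `i_p(x, y) = r x * r y * d(x, y)` and
`|r x - r y| ≤ i_p(x, y) ≤ r x + r y`. If some point `z` of a chain from `x` to `y` has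
`r z < (r x + r y) / 4`, then going from `x` to `z` and on to `y` already costs at least
`r x + r y - 2 * r z ≥ (r x + r y) / 2 ≥ i_p(x, y) / 2`. Otherwise every link `(a, b)` costs
at least `((r x + r y) / 4) ^ 2 * d(a, b) ≥ r x * r y * d(a, b) / 4` by AM-GM, and the triangle
inequality for `d` gives `i_p(x, y) / 4` in total.
-/

section ChainSum

variable {α M : Type*} [AddCommMonoid M]

/-- The total cost `∑ k(x_i, x_{i+1})` of the links of the chain `c = [x₀, …, x_k]`, written so that
the elements of `chainSums p x y` are definitionally of the form `chainSum (invKernel p) c`. -/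
def chainSum (k : α → α → M) (c : List α) : M :=
  ((c.zip c.tail).map fun q => k q.1 q.2).sum

theorem chainSum_singleton (k : α → α → M) (a : α) : chainSum k [a] = 0 := rfl

theorem chainSum_cons_cons (k : α → α → M) (a b : α) (l : List α) :
    chainSum k (a :: b :: l) = k a b + chainSum k (b :: l) := by
  simp only [chainSum, List.tail_cons, List.zip_cons_cons, List.map_cons, List.sum_cons]

variable [PartialOrder M] [IsOrderedAddMonoid M] {g k : α → α → M} {c : List α} {x y z : α}

theorem add_le_chainSum_of_mem (g_self : ∀ a, g a a = 0)
    (g_triangle : ∀ a b c, g a c ≤ g a b + g b c) (hgk : c.IsChain fun a b => g a b ≤ k a b)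
    (hx : c.head? = some x) (hy : c.getLast? = some y) (hz : z ∈ c) :
    g x z + g z y ≤ chainSum k c := by
  induction c generalizing x z with
  | nil => cases hz
  | cons a l ih =>
    obtain rfl : a = x := Option.some.inj hx
    cases l with
    | nil =>
      obtain rfl : a = y := Option.some.inj hy
      obtain rfl : z = a := List.mem_singleton.1 hz
      rw [g_self, add_zero, chainSum_singleton]
    | cons b l =>
      obtain ⟨hab, hl⟩ := List.isChain_cons_cons.1 hgk
      have tail_le {w : α} (hw : w ∈ b :: l) : g b w + g w y ≤ chainSum k (b :: l) :=
        ih hl rfl (List.getLast?_cons_cons ▸ hy) hw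
      rw [chainSum_cons_cons]
      rcases List.mem_cons.1 hz with rfl | hz
      · calc
          g z z + g z y = g z y := by rw [g_self, zero_add]
          _ ≤ g z b + (g b b + g b y) := by rw [g_self, zero_add]; exact g_triangle z b y
          _ ≤ k z b + chainSum k (b :: l) := add_le_add hab (tail_le List.mem_cons_self)
      · calc
          g a z + g z y ≤ g a b + g b z + g z y := by gcongr; exact g_triangle a b z
          _ = g a b + (g b z + g z y) := add_assoc _ _ _
          _ ≤ k a b + chainSum k (b :: l) := add_le_add hab (tail_le hz)

theorem le_chainSum (g_self : ∀ a, g a a = 0) (g_triangle : ∀ a b c, g a c ≤ g a b + g b c)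
    (hgk : c.IsChain fun a b => g a b ≤ k a b)
    (hx : c.head? = some x) (hy : c.getLast? = some y) : g x y ≤ chainSum k c := by
  simpa only [g_self, zero_add] using
    add_le_chainSum_of_mem g_self g_triangle hgk hx hy (List.mem_of_head? hx)

end ChainSum

section Inversion

variable {X : Type*} [MetricSpace X] {p x y z : X} {c : List X}

theorem invKernel_eq_inv_mul_inv_mul_dist (p x y : X) :
    invKernel p x y = (dist x p)⁻¹ * (dist y p)⁻¹ * dist x y := by
  rw [invKernel, div_eq_inv_mul, mul_inv]

theorem abs_inv_dist_sub_inv_dist_le_invKernel (hx : x ≠ p) (hy : y ≠ p) :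
    |(dist x p)⁻¹ - (dist y p)⁻¹| ≤ invKernel p x y := by
  have hxp : 0 < dist x p := dist_pos.2 hx
  have hyp : 0 < dist y p := dist_pos.2 hy
  rw [inv_sub_inv hxp.ne' hyp.ne', abs_div, abs_of_pos (mul_pos hxp hyp), invKernel, dist_comm x y]
  gcongr
  exact abs_dist_sub_le y x p

theorem invKernel_le_inv_dist_add_inv_dist (hx : x ≠ p) (hy : y ≠ p) :
    invKernel p x y ≤ (dist x p)⁻¹ + (dist y p)⁻¹ := by
  rw [inv_add_inv (dist_ne_zero.2 hx) (dist_ne_zero.2 hy), invKernel]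
  gcongr
  exact dist_triangle_right x y p

theorem inv_dist_add_inv_dist_sub_le_chainSum (hc : ∀ a ∈ c, a ≠ p)
    (hx : c.head? = some x) (hy : c.getLast? = some y) (hz : z ∈ c) :
    (dist x p)⁻¹ + (dist y p)⁻¹ - 2 * (dist z p)⁻¹ ≤ chainSum (invKernel p) c := by
  have links_ge : c.IsChain fun a b => |(dist a p)⁻¹ - (dist b p)⁻¹| ≤ invKernel p a b :=
    (List.pairwise_of_forall_mem_list fun a ha b hb =>
      abs_inv_dist_sub_inv_dist_le_invKernel (hc a ha) (hc b hb)).isChain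
  calc
    (dist x p)⁻¹ + (dist y p)⁻¹ - 2 * (dist z p)⁻¹
      = ((dist x p)⁻¹ - (dist z p)⁻¹) + -((dist z p)⁻¹ - (dist y p)⁻¹) := by ring
    _ ≤ |(dist x p)⁻¹ - (dist z p)⁻¹| + |(dist z p)⁻¹ - (dist y p)⁻¹| :=
      add_le_add (le_abs_self _) (neg_le_abs _)
    _ ≤ chainSum (invKernel p) c :=
      add_le_chainSum_of_mem (g := fun a b => |(dist a p)⁻¹ - (dist b p)⁻¹|)
        (fun a => by rw [sub_self, abs_zero]) (fun _ _ _ => abs_sub_le _ _ _) links_ge hx hy hz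

theorem sq_mul_dist_le_chainSum {m : ℝ} (hm : 0 ≤ m) (hc : ∀ a ∈ c, m ≤ (dist a p)⁻¹)
    (hx : c.head? = some x) (hy : c.getLast? = some y) :
    m ^ 2 * dist x y ≤ chainSum (invKernel p) c := by
  have links_ge : c.IsChain fun a b => m ^ 2 * dist a b ≤ invKernel p a b := by
    refine (List.pairwise_of_forall_mem_list fun a ha b hb => ?_).isChain
    rw [invKernel_eq_inv_mul_inv_mul_dist, sq]
    gcongr
    exacts [hc a ha, hc b hb]
  refine le_chainSum (g := fun a b => m ^ 2 * dist a b) (fun a => by rw [dist_self, mul_zero])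
    (fun a b c => ?_) links_ge hx hy
  rw [← mul_add]
  gcongr
  exact dist_triangle a b c

theorem quarter_invKernel_le_chainSum (hc : ∀ a ∈ c, a ≠ p)
    (hx : c.head? = some x) (hy : c.getLast? = some y) :
    1 / 4 * invKernel p x y ≤ chainSum (invKernel p) c := by
  set r : X → ℝ := fun a => (dist a p)⁻¹
  have r_nonneg (a : X) : 0 ≤ r a := inv_nonneg.2 dist_nonneg
  by_cases far : ∃ z ∈ c, r z < (r x + r y) / 4
  · obtain ⟨z, hz, hrz⟩ := far
    calc
      1 / 4 * invKernel p x y ≤ 1 / 4 * (r x + r y) := by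
        gcongr
        exact invKernel_le_inv_dist_add_inv_dist (hc x (List.mem_of_head? hx))
          (hc y (List.mem_of_getLast? hy))
      _ ≤ r x + r y - 2 * r z := by linarith [r_nonneg x, r_nonneg y]
      _ ≤ chainSum (invKernel p) c := inv_dist_add_inv_dist_sub_le_chainSum hc hx hy hz
  · push Not at far
    calc
      1 / 4 * invKernel p x y = 4 * r x * r y / 16 * dist x y := by
        rw [invKernel_eq_inv_mul_inv_mul_dist]; ring
      _ ≤ (r x + r y) ^ 2 / 16 * dist x y := by
        gcongr
        exact four_mul_le_sq_add (r x) (r y)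
      _ = ((r x + r y) / 4) ^ 2 * dist x y := by ring
      _ ≤ chainSum (invKernel p) c :=
        sq_mul_dist_le_chainSum (by linarith [r_nonneg x, r_nonneg y]) far hx hy

theorem quarter_invKernel_mem_lowerBounds_chainSums (p x y : X) :
    1 / 4 * invKernel p x y ∈ lowerBounds (chainSums p x y) := by
  rintro _ ⟨c, -, hx, hy, hc, rfl⟩
  exact quarter_invKernel_le_chainSum hc hx hy

theorem invKernel_mem_chainSums (hx : x ≠ p) (hy : y ≠ p) :
    invKernel p x y ∈ chainSums p x y := by
  refine ⟨[x, y], List.cons_ne_nil _ _, rfl, rfl, ?_, ?_⟩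
  · exact List.forall_mem_cons.2 ⟨hx, List.forall_mem_singleton.2 hy⟩
  · exact (add_zero _).symm

end Inversion

/-- For all `x, y ∈ X ∖ {p}`, `(1/4)·i_p(x,y) ≤ d_p(x,y) ≤ i_p(x,y)`, where
`d_p` is the infimum of chain sums. -/
theorem inversion_distance_comparable {X : Type*} [MetricSpace X]
    (p x y : X) (hx : x ≠ p) (hy : y ≠ p) :
    (1 / 4) * invKernel p x y ≤ sInf (chainSums p x y) ∧
      sInf (chainSums p x y) ≤ invKernel p x y := by
  have lower := quarter_invKernel_mem_lowerBounds_chainSums p x y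
  have direct := invKernel_mem_chainSums hx hy
  exact ⟨le_csInf ⟨_, direct⟩ lower, csInf_le ⟨_, lower⟩ direct⟩
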